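/- arXiv:1907.01473 — 7 statements merged into one kernel-verified Lean document; each statement's English description precedes it below -/
import Mathlib

section
/- Let g : ℝ → ℝ be a continuously differentiable 2π-periodic function having 0 as a regular value, i.e., g(t) = 0 implies g'(t) ≠ 0. Then the set {t ∈ [0, 2π) : g(t) = 0} is finite and has an even number of elements. -/
/-!
Zeros of `g` are isolated because `g' ≠ 0` there, so compactness of `[0, 2π]` makes them finitely
many. At each zero `g` changes sign, hence by induction on the number of zeros in `(a, b)`, that
number is even exactly when `g a` and `g b` have the same sign
(`even_ncard_zeros_iff`). Choose `a < 0` such that `g` has no zero in `[a, 0)`. By periodicity there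
is none in `[a + 2π, 2π)` either, so the zeros in `[0, 2π)` are exactly those in
`(a, a + 2π)`, and `g (a + 2π) = g a` has the same sign as `g a`.
-/

open Real Set

open Filter Topology

/-- Near a simple zero `z`, `g t` has the sign of `g' z * (t - z)`. -/
lemma eventually_sign_near_zero {g : ℝ → ℝ} {z d : ℝ} (hd : HasDerivAt g d z) (hd0 : d ≠ 0)
    (hz : g z = 0) : ∀ᶠ t in 𝓝[≠] z, 0 < g t * (d * (t - z)) := by
  have h1 := (hasDerivAt_iff_tendsto_slope.1 hd).mul_const d
  have h2 : ∀ᶠ t in 𝓝[≠] z, 0 < slope g z t * d :=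
    h1.eventually (lt_mem_nhds (mul_self_pos.2 hd0))
  filter_upwards [h2, self_mem_nhdsWithin] with t ht htz
  have hne : t - z ≠ 0 := sub_ne_zero.2 htz
  rw [slope_def_field, hz, sub_zero] at ht
  have h3 : g t * (d * (t - z)) = (g t / (t - z) * d) * (t - z) ^ 2 := by
    field_simp
  rw [h3]
  positivity

lemma eventually_ne_zero_punctured {g : ℝ → ℝ} (hg : Differentiable ℝ g)
    (hreg : ∀ t, g t = 0 → deriv g t ≠ 0) (z : ℝ) : ∀ᶠ t in 𝓝[≠] z, g t ≠ 0 := by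
  by_cases hz : g z = 0
  · exact (hg z).hasDerivAt.eventually_ne (hreg z hz)
  · exact (hg.continuous.continuousAt.eventually_ne hz).filter_mono nhdsWithin_le_nhds

lemma finite_zeros_of_subset_Icc {g : ℝ → ℝ} (hg : Differentiable ℝ g)
    (hreg : ∀ t, g t = 0 → deriv g t ≠ 0) {s : Set ℝ} {a b : ℝ} (hs : s ⊆ Icc a b) :
    {t ∈ s | g t = 0}.Finite := by
  by_contra hinf
  obtain ⟨x, -, hx⟩ := Set.Infinite.exists_accPt_of_subset_isCompact hinf isCompact_Icc
    ((sep_subset _ _).trans hs)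
  rw [accPt_iff_frequently_nhdsNE] at hx
  exact hx ((eventually_ne_zero_punctured hg hreg x).mono fun t ht h => ht h.2)

/-- By the intermediate value theorem, a function without zeros on `(a, b)` and nonzero at both
endpoints has the same sign at both. -/
lemma mul_pos_of_no_zero {g : ℝ → ℝ} (hg : Continuous g) {a b : ℝ} (hab : a < b)
    (ha : g a ≠ 0) (hb : g b ≠ 0) (h : ∀ t ∈ Ioo a b, g t ≠ 0) : 0 < g a * g b := by
  by_contra hneg
  have hlt : g a * g b < 0 := lt_of_le_of_ne (not_lt.1 hneg) (mul_ne_zero ha hb)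
  rcases mul_neg_iff.1 hlt with ⟨h1, h2⟩ | ⟨h1, h2⟩
  · obtain ⟨t, ht, h0⟩ := intermediate_value_Ioo' hab.le hg.continuousOn ⟨h2, h1⟩
    exact h t ht h0
  · obtain ⟨t, ht, h0⟩ := intermediate_value_Ioo hab.le hg.continuousOn ⟨h1, h2⟩
    exact h t ht h0

/-- The number of zeros between two non-zeros `a < b` is even exactly when `g a` and `g b` have the
same sign. The induction splits off the largest zero, across which `g` changes sign. -/
lemma even_ncard_zeros_iff {g : ℝ → ℝ} (hg : Differentiable ℝ g)
    (hreg : ∀ t, g t = 0 → deriv g t ≠ 0) (n : ℕ) :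
    ∀ a b : ℝ, a < b → g a ≠ 0 → g b ≠ 0 → {t ∈ Ioo a b | g t = 0}.ncard = n →
      (Even n ↔ 0 < g a * g b) := by
  induction n with
  | zero =>
    intro a b hab ha hb hn
    have hfin := finite_zeros_of_subset_Icc hg hreg (Ioo_subset_Icc_self (a := a) (b := b))
    have hempty := (ncard_eq_zero hfin).1 hn
    refine iff_of_true Even.zero (mul_pos_of_no_zero hg.continuous hab ha hb fun t ht h0 => ?_)
    exact hempty.subset (show t ∈ {t ∈ Ioo a b | g t = 0} from ⟨ht, h0⟩)
  | succ n ih =>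
    intro a b hab ha hb hn
    have hfin := finite_zeros_of_subset_Icc hg hreg (Ioo_subset_Icc_self (a := a) (b := b))
    have hne : {t ∈ Ioo a b | g t = 0}.Nonempty := nonempty_of_ncard_ne_zero (by omega)
    obtain ⟨z, ⟨⟨haz, hzb⟩, hz⟩, hmax⟩ := exists_max_image _ id hfin hne
    simp only [id] at hmax
    have hsign := eventually_sign_near_zero (hg z).hasDerivAt (hreg z hz) hz
    -- `l < z` bounds a left neighbourhood on which the sign of `g` is known.
    obtain ⟨l, hlz, hl⟩ := (mem_nhdsLT_iff_exists_Ioo_subset' haz).1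
      (hsign.filter_mono (nhdsWithin_mono z fun t (ht : t < z) => ht.ne))
    obtain ⟨r, hzr, hr⟩ := (mem_nhdsGT_iff_exists_Ioo_subset' hzb).1
      (hsign.filter_mono (nhdsWithin_mono z fun t (ht : z < t) => ht.ne'))
    simp only [mem_Iio, mem_Ioi] at hlz hzr
    obtain ⟨c, hc, hcz⟩ := exists_between (max_lt haz hlz)
    obtain ⟨e, hze, he⟩ := exists_between (lt_min hzb hzr)
    obtain ⟨hac, hlc⟩ := max_lt_iff.1 hc
    obtain ⟨heb, her⟩ := lt_min_iff.1 he
    have hleft : ∀ t ∈ Ico c z, 0 < g t * (deriv g z * (t - z)) := fun t ht =>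
      hl ⟨hlc.trans_le ht.1, ht.2⟩
    have hcs := hleft c ⟨le_rfl, hcz⟩
    have hes : 0 < g e * (deriv g z * (e - z)) := hr ⟨hze, her⟩
    have hc0 : g c ≠ 0 := left_ne_zero_of_mul hcs.ne'
    have he0 : g e ≠ 0 := left_ne_zero_of_mul hes.ne'
    have hce : g c * g e < 0 := by
      have h1 : 0 < g c * g e * (deriv g z ^ 2 * ((c - z) * (e - z))) := by
        have := mul_pos hcs hes
        linarith
      have h2 : deriv g z ^ 2 * ((c - z) * (e - z)) ≤ 0 :=
        mul_nonpos_of_nonneg_of_nonpos (sq_nonneg _)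
          (mul_nonpos_of_nonpos_of_nonneg (by linarith) (by linarith))
      exact neg_of_mul_pos_left h1 h2
    have heb' : 0 < g e * g b := mul_pos_of_no_zero hg.continuous heb he0 hb fun t ht h0 =>
      absurd (hmax t ⟨⟨(haz.trans hze).trans ht.1, ht.2⟩, h0⟩) (not_le.2 (hze.trans ht.1))
    have hset : {t ∈ Ioo a b | g t = 0} = insert z {t ∈ Ioo a c | g t = 0} := by
      ext t
      constructor
      · intro ht
        rcases (hmax t ht).eq_or_lt with h | h
        · exact Or.inl h
        · refine Or.inr ⟨⟨ht.1.1, ?_⟩, ht.2⟩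
          by_contra hct
          exact left_ne_zero_of_mul (hleft t ⟨not_lt.1 hct, h⟩).ne' ht.2
      · rintro (rfl | ht)
        · exact ⟨⟨haz, hzb⟩, hz⟩
        · exact ⟨⟨ht.1.1, ht.1.2.trans (hcz.trans hzb)⟩, ht.2⟩
    have hfin' := finite_zeros_of_subset_Icc hg hreg (Ioo_subset_Icc_self (a := a) (b := c))
    rw [hset, ncard_insert_of_notMem (fun h => absurd h.1.2 (not_lt.2 hcz.le)) hfin'] at hn
    rw [Nat.even_add_one, ih a c hac ha hc0 (by omega)]
    have hprod : (g a * g c) * (g a * g b) < 0 := by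
      have hcb : g c * g b < 0 := by
        have h1 : (g c * g b) * (g e * g e) < 0 := by
          have := mul_neg_of_neg_of_pos hce heb'
          linarith
        exact neg_of_mul_neg_left h1 (mul_self_nonneg _)
      have := mul_neg_of_pos_of_neg (mul_self_pos.2 ha) hcb
      linarith
    rcases mul_neg_iff.1 hprod with ⟨h1, h2⟩ | ⟨h1, h2⟩
    · exact iff_of_false (not_not.2 h1) h2.not_gt
    · exact iff_of_true h1.not_gt h2

/-- If `g : ℝ → ℝ` is continuously differentiable, `2π`-periodic and has `0` as a
regular value, then its zero set in `[0, 2π)` is finite with an even number of elements. -/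
theorem zeros_finite_and_even (g : ℝ → ℝ) (hg : ContDiff ℝ 1 g)
    (hper : Function.Periodic g (2 * π))
    (hreg : ∀ t, g t = 0 → deriv g t ≠ 0) :
    {t ∈ Ico (0 : ℝ) (2 * π) | g t = 0}.Finite ∧
      Even {t ∈ Ico (0 : ℝ) (2 * π) | g t = 0}.ncard := by
  have hd : Differentiable ℝ g := hg.differentiable one_ne_zero
  refine ⟨finite_zeros_of_subset_Icc hd hreg Ico_subset_Icc_self, ?_⟩
  have hpi : 0 < 2 * π := two_pi_pos
  obtain ⟨l, hl0, hl⟩ := (mem_nhdsLT_iff_exists_Ioo_subset' (neg_lt_zero.2 hpi)).1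
    ((eventually_ne_zero_punctured hd hreg 0).filter_mono
      (nhdsWithin_mono 0 fun t (ht : t < 0) => ht.ne))
  obtain ⟨a, hla, ha0⟩ := exists_between (show l < 0 from hl0)
  have hne : ∀ t ∈ Ico a 0, g t ≠ 0 := fun t ht => hl ⟨hla.trans_le ht.1, ht.2⟩
  have ha : g a ≠ 0 := hne a ⟨le_rfl, ha0⟩
  have hset : {t ∈ Ico (0 : ℝ) (2 * π) | g t = 0} = {t ∈ Ioo a (a + 2 * π) | g t = 0} := by
    ext t
    constructor
    · rintro ⟨⟨h0, h1⟩, hz⟩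
      refine ⟨⟨ha0.trans_le h0, ?_⟩, hz⟩
      by_contra hlt
      exact hne (t - 2 * π) ⟨by linarith, by linarith⟩ ((hper.sub_eq t).trans hz)
    · rintro ⟨⟨h0, h1⟩, hz⟩
      refine ⟨⟨?_, by linarith⟩, hz⟩
      by_contra hlt
      exact hne t ⟨h0.le, not_le.1 hlt⟩ hz
  rw [hset, even_ncard_zeros_iff hd hreg _ a (a + 2 * π) (by linarith) ha
    (by rwa [hper a]) rfl, hper a]
  exact mul_self_pos.2 ha
end

section
/- Let g : ℝ → ℝ be a continuously differentiable 2π-periodic function having 0 as a regular value (g(t) = 0 implies g'(t) ≠ 0), and suppose g has at least one zero. Let t₁ < t₂ < ⋯ < t_m be the zeros of g in [0, 2π), and set t_{m+1} = t₁ + 2π. Then on consecutive open arcs (t_i, t_{i+1}) the function g has constant, alternating signs, and the sum over i = 1, …, m of the sign of g on the arc (t_i, t_{i+1}) equals 0. -/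
open Real Set

/-!
At each zero `t i` put `d i = sign (g' (t i)) = ±1`. On the arc `(t i, t (i+1))` the function `g`
has no zero, hence a constant sign; comparing with the first-order behaviour of `g` at the two
endpoints shows that this sign is both `d i` and `-d (i+1)` (`sign_eq_sign_deriv_endpoints`).
So the sign of the `i`-th arc is `d i`, the signs alternate, and twice their sum telescopes to
`d 0 - d m`, which vanishes because `t m = t 0 + 2π` and `g'` is `2π`-periodic.
-/

/-- One-sided first-order behaviour at the endpoints of an arc on which `g > 0`. The weak
inequalities suffice, since `g'` does not vanish at a regular zero. -/
lemma deriv_endpoints_of_pos {g : ℝ → ℝ} {a b : ℝ} (hab : a < b) (ha : g a = 0) (hb : g b = 0)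
    (hpos : ∀ s ∈ Ioo a b, 0 < g s) : 0 ≤ deriv g a ∧ deriv g b ≤ 0 := by
  constructor
  · by_contra! h
    have h1 := (eventually_nhdsWithin_sign_eq_of_deriv_neg h ha).filter_mono
      (nhdsWithin_le_nhds (s := Ioi a))
    obtain ⟨x, hx, hx'⟩ := (h1.and (Ioo_mem_nhdsGT hab)).exists
    rw [sign_pos (hpos x hx'), sign_neg (sub_neg.2 hx'.1)] at hx
    simp at hx
  · by_contra! h
    have h1 := (eventually_nhdsWithin_sign_eq_of_deriv_pos h hb).filter_mono
      (nhdsWithin_le_nhds (s := Iio b))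
    obtain ⟨x, hx, hx'⟩ := (h1.and (Ioo_mem_nhdsLT hab)).exists
    rw [sign_pos (hpos x hx'), sign_neg (sub_neg.2 hx'.2)] at hx
    simp at hx

/-- Between two consecutive regular zeros `a < b`, the sign of `g` is that of `g' a` and opposite
to that of `g' b`. -/
lemma sign_eq_sign_deriv_endpoints {g : ℝ → ℝ} (hg : Continuous g) {a b : ℝ} (hab : a < b)
    (ha : g a = 0) (hb : g b = 0) (ha' : deriv g a ≠ 0) (hb' : deriv g b ≠ 0)
    (hne : ∀ s ∈ Ioo a b, g s ≠ 0) :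
    (∀ s ∈ Ioo a b, Real.sign (g s) = Real.sign (deriv g a)) ∧
      Real.sign (deriv g b) = -Real.sign (deriv g a) := by
  have hcases : (∀ s ∈ Ioo a b, 0 < g s) ∨ (∀ s ∈ Ioo a b, g s < 0) := by
    by_contra! h
    obtain ⟨⟨x, hx, hgx⟩, y, hy, hgy⟩ := h
    obtain ⟨z, hz, hgz⟩ := isPreconnected_Ioo.intermediate_value hx hy hg.continuousOn ⟨hgx, hgy⟩
    exact hne z hz hgz
  rcases hcases with h | h
  · obtain ⟨h1, h2⟩ := deriv_endpoints_of_pos hab ha hb h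
    have h1 := lt_of_le_of_ne h1 ha'.symm
    have h2 := lt_of_le_of_ne h2 hb'
    rw [Real.sign_of_pos h1, Real.sign_of_neg h2]
    exact ⟨fun s hs => Real.sign_of_pos (h s hs), rfl⟩
  · obtain ⟨h1, h2⟩ := deriv_endpoints_of_pos (g := fun x => -g x) hab (by simp [ha])
      (by simp [hb]) (fun s hs => neg_pos.2 (h s hs))
    simp only [deriv.fun_neg] at h1 h2
    have h1 := lt_of_le_of_ne (neg_nonneg.1 h1) ha'
    have h2 := lt_of_le_of_ne (neg_nonpos.1 h2) hb'.symm
    rw [Real.sign_of_neg h1, Real.sign_of_pos h2]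
    exact ⟨fun s hs => Real.sign_of_neg (h s hs), by simp⟩

/-- Lemma 2.8(b): if the `2π`-periodic `C¹` function `g` has `0` as a regular value and its
zeros in `[0, 2π)` are `t₁ < ⋯ < t_m` (with `t_{m+1} = t₁ + 2π`), then on the consecutive
open arcs `(tᵢ, tᵢ₊₁)` the sign of `g` is constant and alternating, and the sum of these
signs over all `m` arcs is `0`. -/
theorem alternating_signs_sum_zero (g : ℝ → ℝ) (hg : ContDiff ℝ 1 g)
    (hper : Function.Periodic g (2 * π))
    (hreg : ∀ t, g t = 0 → deriv g t ≠ 0)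
    (m : ℕ) (hm : 0 < m) (t : Fin (m + 1) → ℝ)
    (hmono : StrictMono t)
    (hrange : ∀ i : Fin m, t i.castSucc ∈ Ico (0 : ℝ) (2 * π))
    (hlast : t (Fin.last m) = t 0 + 2 * π)
    (hzeros : ∀ s ∈ Ico (0 : ℝ) (2 * π), (g s = 0 ↔ ∃ i : Fin m, s = t i.castSucc)) :
    ∃ ε : Fin m → ℝ,
      (∀ i, ε i = 1 ∨ ε i = -1) ∧
      (∀ i : Fin m, ∀ s ∈ Ioo (t i.castSucc) (t i.succ), Real.sign (g s) = ε i) ∧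
      (∀ i j : Fin m, (i : ℕ) + 1 = (j : ℕ) → ε j = -ε i) ∧
      ∑ i, ε i = 0 := by
  have hzero_cast (i : Fin m) : g (t i.castSucc) = 0 := (hzeros _ (hrange i)).2 ⟨i, rfl⟩
  have h0 : (⟨0, hm⟩ : Fin m).castSucc = 0 := rfl
  have hzero (k : Fin (m + 1)) : g (t k) = 0 := by
    induction k using Fin.lastCases with
    | last =>
      rw [hlast, hper, ← h0]
      exact hzero_cast _
    | cast i => exact hzero_cast i
  have hne (i : Fin m) : ∀ s ∈ Ioo (t i.castSucc) (t i.succ), g s ≠ 0 := by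
    intro s hs hgs
    have hs0 : 0 ≤ s := (hrange i).1.trans hs.1.le
    rcases lt_or_ge s (2 * π) with hlt | hge
    · obtain ⟨j, rfl⟩ := (hzeros s ⟨hs0, hlt⟩).1 hgs
      have h1 := hmono.lt_iff_lt.1 hs.1
      have h2 := hmono.lt_iff_lt.1 hs.2
      simp only [Fin.lt_def, Fin.val_castSucc, Fin.val_succ] at h1 h2
      omega
    · -- Past `2π` one is on the last arc; translating back by `2π` would give a zero below `t 0`.
      have hle : s < t 0 + 2 * π :=
        hs.2.trans_le (hlast ▸ hmono.monotone (Fin.le_last _))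
      have ht0 : t 0 < 2 * π := (hrange ⟨0, hm⟩).2
      obtain ⟨j, hj⟩ := (hzeros (s - 2 * π) ⟨by linarith, by linarith⟩).1
        (by rw [hper.sub_eq, hgs])
      have := hmono.monotone (Fin.zero_le j.castSucc)
      linarith
  have key (i : Fin m) := sign_eq_sign_deriv_endpoints hg.continuous
    (hmono (Fin.castSucc_lt_succ (i := i))) (hzero _) (hzero _) (hreg _ (hzero _))
    (hreg _ (hzero _)) (hne i)
  have hder : deriv g (t (Fin.last m)) = deriv g (t 0) := by
    rw [hlast, ← deriv_comp_add_const, funext hper]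
  refine ⟨fun i => Real.sign (deriv g (t i.castSucc)), fun i => ?_, fun i => (key i).1,
    fun i j hij => ?_, ?_⟩
  · exact (Real.sign_apply_eq_of_ne_zero _ (hreg _ (hzero _))).symm
  · have : j.castSucc = i.succ := Fin.ext (by simp [← hij])
    simp only [this, (key i).2]
  · -- Splitting off the last or the first term of `∑ k, d k` gives the telescoping identity.
    have h1 := Fin.sum_univ_castSucc (fun k => Real.sign (deriv g (t k)))
    have h2 := Fin.sum_univ_succ (fun k => Real.sign (deriv g (t k)))
    simp only [fun i => (key i).2, Finset.sum_neg_distrib, hder] at h1 h2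
    linarith
end

section
/- Let E : S¹ → ℝ² be a continuous rotating vector field, i.e., ⟨JE(x), x⟩ ≠ 0 for all x ∈ S¹. Then ⟨JE(x), x⟩ < 0 for all x ∈ S¹ (equivalently, rind(E) = −1) if and only if there exists a continuous homotopy H : [0,1] × S¹ → ℝ² with H(0,·) = E, H(1,·) = E⁻, and ⟨J H(t,x), x⟩ ≠ 0 for all t ∈ [0,1] and x ∈ S¹, where E⁻(x₁,x₂) = (−x₂, x₁). -/
/-!
For fixed `x ∈ S¹` the map `v ↦ ⟨Jv, x⟩` is linear, and it takes the value `-|x|² = -1` at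
`E⁻(x)`. If `⟨JE(x), x⟩ < 0` on `S¹`, the straight-line homotopy from `E` to `E⁻` therefore stays
in the open half-plane `⟨Jv, x⟩ < 0` and is admissible. Conversely, along an admissible homotopy
`t ↦ ⟨J H(t,x), x⟩` is continuous and never zero, so by the intermediate value theorem it keeps the
negative sign it has at `t = 1`.
-/

open Set

/-- Counterclockwise rotation of the plane by `π/2`: `J(a,b) = (-b,a)`. -/
def J (p : ℝ × ℝ) : ℝ × ℝ := (-p.2, p.1)

/-- Euclidean inner product on `ℝ²`. -/
def dot (p q : ℝ × ℝ) : ℝ := p.1 * q.1 + p.2 * q.2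

/-- The unit circle `S¹ ⊆ ℝ²`. -/
def unitCircle : Set (ℝ × ℝ) := {p | p.1 ^ 2 + p.2 ^ 2 = 1}

/-- Proposition 2.10(i): a continuous rotating field `E` on `S¹` has `⟨JE(x), x⟩ < 0` on
all of `S¹` (ring index `-1`) if and only if `E` is admissibly homotopic to
`E⁻(x₁,x₂) = (-x₂, x₁)`. -/
theorem rind_neg_one_iff_admissibly_homotopic_to_Eminus
    (E : ℝ × ℝ → ℝ × ℝ) (hE : ContinuousOn E unitCircle)
    (hrot : ∀ x ∈ unitCircle, dot (J (E x)) x ≠ 0) :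
    (∀ x ∈ unitCircle, dot (J (E x)) x < 0) ↔
      ∃ H : ℝ × (ℝ × ℝ) → ℝ × ℝ,
        ContinuousOn H (Icc (0 : ℝ) 1 ×ˢ unitCircle) ∧
        (∀ x ∈ unitCircle, H (0, x) = E x) ∧
        (∀ x ∈ unitCircle, H (1, x) = (-x.2, x.1)) ∧
        ∀ t ∈ Icc (0 : ℝ) 1, ∀ x ∈ unitCircle, dot (J (H (t, x))) x ≠ 0 := by
  constructor
  · intro hneg
    -- The straight-line homotopy works: negativity of `⟨JE(x), x⟩` is a convex condition on `E`.
    refine ⟨fun p => (1 - p.1) • E p.2 + p.1 • (-p.2.2, p.2.1), ?_, ?_, ?_, ?_⟩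
    · have hE' : ContinuousOn (fun p : ℝ × (ℝ × ℝ) => E p.2) (Icc (0 : ℝ) 1 ×ˢ unitCircle) :=
        hE.comp continuousOn_snd fun p hp => hp.2
      have hs : Continuous fun p : ℝ × (ℝ × ℝ) => 1 - p.1 := by fun_prop
      have hr : Continuous fun p : ℝ × (ℝ × ℝ) => p.1 • ((-p.2.2, p.2.1) : ℝ × ℝ) := by fun_prop
      exact (hs.continuousOn.smul hE').add hr.continuousOn
    · intro x _
      simp
    · intro x _
      simp
    · rintro t ⟨ht0, ht1⟩ x hx
      have h := hneg x hx
      have hx1 : x.1 ^ 2 + x.2 ^ 2 = 1 := hx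
      have key : dot (J ((1 - t) • E x + t • (-x.2, x.1))) x
          = (1 - t) * dot (J (E x)) x - t := by
        simp only [dot, J, Prod.fst_add, Prod.snd_add, Prod.smul_fst, Prod.smul_snd, smul_eq_mul]
        linear_combination (-t) * hx1
      refine ne_of_lt ?_
      change dot (J ((1 - t) • E x + t • (-x.2, x.1))) x < 0
      rw [key]
      rcases ht1.lt_or_eq with hlt | rfl
      · nlinarith [mul_neg_of_pos_of_neg (sub_pos.mpr hlt) h]
      · norm_num
  · rintro ⟨H, hH, h0, h1, hne⟩ x hx
    have hx1 : x.1 ^ 2 + x.2 ^ 2 = 1 := hx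
    have hpath : ContinuousOn (fun t : ℝ => H (t, x)) (Icc 0 1) :=
      hH.comp (by fun_prop) fun t ht => ⟨ht, hx⟩
    have hcont : ContinuousOn (fun t : ℝ => dot (J (H (t, x))) x) (Icc 0 1) := by
      have hdot : Continuous fun v : ℝ × ℝ => dot (J v) x := by
        simp only [dot, J]
        fun_prop
      exact hdot.comp_continuousOn hpath
    by_contra hge
    -- At `t = 1` the value is `-|x|² = -1`, so a nonnegative value at `t = 0` forces a zero.
    have hend : dot (J (H (1, x))) x ≤ 0 := by
      rw [h1 x hx]
      simp only [dot, J]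
      nlinarith
    have hstart : 0 ≤ dot (J (H (0, x))) x := by
      rw [h0 x hx]
      exact not_lt.mp hge
    obtain ⟨t, ht, hzero⟩ := intermediate_value_Icc' zero_le_one hcont ⟨hend, hstart⟩
    exact hne t ht x hx hzero
end

section
/- Let E : S¹ → ℝ² be a continuous rotating vector field, i.e., ⟨JE(x), x⟩ ≠ 0 for all x ∈ S¹. Then ⟨JE(x), x⟩ > 0 for all x ∈ S¹ (equivalently, rind(E) = +1) if and only if there exists a continuous homotopy H : [0,1] × S¹ → ℝ² with H(0,·) = E, H(1,·) = E⁺, and ⟨J H(t,x), x⟩ ≠ 0 for all t ∈ [0,1] and x ∈ S¹, where E⁺(x₁,x₂) = (x₂, −x₁). -/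
/-! If `⟨JE(x), x⟩ > 0` on the circle, the straight-line homotopy from `E` to `E⁺` is admissible:
`⟨J·, x⟩` is linear and `⟨JE⁺(x), x⟩ = |x|² = 1`, so along it the pairing is
`(1 - t) ⟨JE(x), x⟩ + t > 0`. Conversely, for fixed `x` the function `t ↦ ⟨JH(t,x), x⟩` is continuous
and nonvanishing on `[0,1]` and equals `1` at `t = 1`, so by the intermediate value theorem it is
positive at `t = 0`. -/

open Set

/-- Proposition 2.10(ii): a continuous rotating field `E` on `S¹` has `⟨JE(x), x⟩ > 0` on
all of `S¹` (ring index `+1`) if and only if `E` is admissibly homotopic to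
`E⁺(x₁,x₂) = (x₂, -x₁)`. -/
theorem rind_one_iff_admissibly_homotopic_to_Eplus
    (E : ℝ × ℝ → ℝ × ℝ) (hE : ContinuousOn E unitCircle)
    (hrot : ∀ x ∈ unitCircle, dot (J (E x)) x ≠ 0) :
    (∀ x ∈ unitCircle, 0 < dot (J (E x)) x) ↔
      ∃ H : ℝ × (ℝ × ℝ) → ℝ × ℝ,
        ContinuousOn H (Icc (0 : ℝ) 1 ×ˢ unitCircle) ∧
        (∀ x ∈ unitCircle, H (0, x) = E x) ∧
        (∀ x ∈ unitCircle, H (1, x) = (x.2, -x.1)) ∧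
        ∀ t ∈ Icc (0 : ℝ) 1, ∀ x ∈ unitCircle, dot (J (H (t, x))) x ≠ 0 := by
  constructor
  · intro hpos
    refine ⟨fun p => (1 - p.1) • E p.2 + p.1 • (p.2.2, -p.2.1), ?_, ?_, ?_, ?_⟩
    · have hE' : ContinuousOn (fun p : ℝ × (ℝ × ℝ) => E p.2) (Icc (0 : ℝ) 1 ×ˢ unitCircle) :=
        hE.comp continuousOn_snd fun p hp => hp.2
      exact ((continuous_const.sub continuous_fst).continuousOn.smul hE').add
        (Continuous.continuousOn (by fun_prop))
    · intro x _
      simp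
    · intro x _
      simp
    · rintro t ⟨ht0, ht1⟩ x hx
      have hx1 : x.1 ^ 2 + x.2 ^ 2 = 1 := hx
      have key : dot (J ((1 - t) • E x + t • (x.2, -x.1))) x
          = (1 - t) * dot (J (E x)) x + t := by
        simp only [dot, J, Prod.fst_add, Prod.snd_add, Prod.smul_fst, Prod.smul_snd, smul_eq_mul]
        linear_combination t * hx1
      change dot (J ((1 - t) • E x + t • (x.2, -x.1))) x ≠ 0
      rw [key]
      have h := hpos x hx
      rcases ht0.eq_or_lt with rfl | ht
      · simpa using h.ne'
      · have : 0 ≤ (1 - t) * dot (J (E x)) x := mul_nonneg (by linarith) h.le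
        linarith
  · rintro ⟨H, hH, h0, h1, hne⟩ x hx
    have hx1 : x.1 ^ 2 + x.2 ^ 2 = 1 := hx
    have hc : ContinuousOn (fun t : ℝ => H (t, x)) (Icc 0 1) :=
      hH.comp (by fun_prop) fun t ht => ⟨ht, hx⟩
    have hg : ContinuousOn (fun t : ℝ => dot (J (H (t, x))) x) (Icc 0 1) := by
      exact (hc.snd.neg.mul continuousOn_const).add (hc.fst.mul continuousOn_const)
    by_contra hneg
    have hmem : (0 : ℝ) ∈ Icc (dot (J (H (0, x))) x) (dot (J (H (1, x))) x) := by
      rw [h0 x hx, h1 x hx]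
      refine ⟨not_lt.mp hneg, ?_⟩
      simp only [dot, J]
      nlinarith
    obtain ⟨t, ht, hzero⟩ := intermediate_value_Icc zero_le_one hg hmem
    exact hne t ht x hx hzero
end

section
/- Let E₀, E₁ : S¹ → ℝ² be continuous rotating vector fields, i.e., ⟨JE_i(x), x⟩ ≠ 0 for all x ∈ S¹, i = 0, 1. Then there exists a continuous homotopy H : [0,1] × S¹ → ℝ² with H(0,·) = E₀, H(1,·) = E₁ and ⟨J H(t,x), x⟩ ≠ 0 for all (t,x) if and only if sign⟨J E₀(x), x⟩ = sign⟨J E₁(y), y⟩ for all x, y ∈ S¹, i.e., if and only if rind(E₀) = rind(E₁). Thus the ring index classifies rotating fields up to admissible homotopy. -/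
/-!
The pairing `⟨J H(t,x), x⟩` along an admissible homotopy is a continuous nowhere vanishing function
on `[0,1] × S¹`, which is connected, so it has constant sign (`sign_eq_of_ne_zero`); comparing `t = 0`
with `t = 1` gives equality of the ring indices. Conversely, `E ↦ ⟨J E, x⟩` is linear, so if the
signs agree, the straight-line homotopy from `E₀` to `E₁` is admissible: its pairing with `x` is a
convex combination of two nonzero numbers of the same sign.
-/

open Set

theorem isPreconnected_unitCircle : IsPreconnected unitCircle := by
  have h : unitCircle = range fun θ : ℝ => (Real.cos θ, Real.sin θ) := by
    ext ⟨a, b⟩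
    simp only [unitCircle, mem_ofPred_eq, mem_range, Prod.mk.injEq]
    constructor
    · intro hab
      have hn : ‖(⟨a, b⟩ : ℂ)‖ = 1 := by
        rw [← sq_eq_sq₀ (norm_nonneg _) zero_le_one, Complex.sq_norm, Complex.normSq_mk]
        linarith
      refine ⟨Complex.arg ⟨a, b⟩, ?_, ?_⟩
      · simpa [hn] using Complex.norm_mul_cos_arg ⟨a, b⟩
      · simpa [hn] using Complex.norm_mul_sin_arg ⟨a, b⟩
    · rintro ⟨θ, rfl, rfl⟩
      exact Real.cos_sq_add_sin_sq θ
  rw [h]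
  exact isPreconnected_range (by fun_prop)

/-- Intermediate value theorem in sign form. -/
theorem sign_eq_of_ne_zero {X : Type*} [TopologicalSpace X] {s : Set X} (hs : IsPreconnected s)
    {g : X → ℝ} (hg : ContinuousOn g s) (h0 : ∀ p ∈ s, g p ≠ 0) {a b : X} (ha : a ∈ s)
    (hb : b ∈ s) : Real.sign (g a) = Real.sign (g b) := by
  rcases lt_or_gt_of_ne (h0 a ha) with h | h <;> rcases lt_or_gt_of_ne (h0 b hb) with h' | h'
  · rw [Real.sign_of_neg h, Real.sign_of_neg h']
  · obtain ⟨c, hc, hc0⟩ := hs.intermediate_value ha hb hg ⟨h.le, h'.le⟩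
    exact absurd hc0 (h0 c hc)
  · obtain ⟨c, hc, hc0⟩ := hs.intermediate_value hb ha hg ⟨h'.le, h.le⟩
    exact absurd hc0 (h0 c hc)
  · rw [Real.sign_of_pos h, Real.sign_of_pos h']

theorem convex_comb_ne_zero {u v t : ℝ} (hu : u ≠ 0) (hv : v ≠ 0)
    (h : Real.sign u = Real.sign v) (ht : t ∈ Icc (0 : ℝ) 1) : (1 - t) * u + t * v ≠ 0 := by
  obtain ⟨h0, h1⟩ := ht
  rcases lt_or_gt_of_ne hu with hu | hu <;> rcases lt_or_gt_of_ne hv with hv | hv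
  · have := (convex_Iio (0 : ℝ)) hu hv (sub_nonneg.2 h1) h0 (by ring)
    exact ne_of_lt this
  · rw [Real.sign_of_neg hu, Real.sign_of_pos hv] at h
    norm_num at h
  · rw [Real.sign_of_pos hu, Real.sign_of_neg hv] at h
    norm_num at h
  · have := (convex_Ioi (0 : ℝ)) hu hv (sub_nonneg.2 h1) h0 (by ring)
    exact ne_of_gt this

/-- Propositions 2.9 and 2.10 combined: two continuous rotating fields on `S¹` are
admissibly homotopic if and only if they have the same ring index, i.e. the same constant
sign of `⟨JE(x), x⟩`.  The ring index thus classifies rotating fields up to admissible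
homotopy. -/
theorem admissibly_homotopic_iff_same_ring_index
    (E₀ E₁ : ℝ × ℝ → ℝ × ℝ)
    (hE₀ : ContinuousOn E₀ unitCircle) (hE₁ : ContinuousOn E₁ unitCircle)
    (hrot₀ : ∀ x ∈ unitCircle, dot (J (E₀ x)) x ≠ 0)
    (hrot₁ : ∀ x ∈ unitCircle, dot (J (E₁ x)) x ≠ 0) :
    (∃ H : ℝ × (ℝ × ℝ) → ℝ × ℝ,
        ContinuousOn H (Icc (0 : ℝ) 1 ×ˢ unitCircle) ∧
        (∀ x ∈ unitCircle, H (0, x) = E₀ x) ∧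
        (∀ x ∈ unitCircle, H (1, x) = E₁ x) ∧
        ∀ t ∈ Icc (0 : ℝ) 1, ∀ x ∈ unitCircle, dot (J (H (t, x))) x ≠ 0) ↔
      ∀ x ∈ unitCircle, ∀ y ∈ unitCircle,
        Real.sign (dot (J (E₀ x)) x) = Real.sign (dot (J (E₁ y)) y) := by
  constructor
  · rintro ⟨H, hH, h0, h1, hne⟩ x hx y hy
    have hg : ContinuousOn (fun p : ℝ × (ℝ × ℝ) => dot (J (H p)) p.2)
        (Icc (0 : ℝ) 1 ×ˢ unitCircle) := by
      unfold dot J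
      fun_prop
    have := sign_eq_of_ne_zero (isPreconnected_Icc.prod isPreconnected_unitCircle) hg
      (fun p hp => hne p.1 hp.1 p.2 hp.2)
      (a := ((0 : ℝ), x)) (b := ((1 : ℝ), y)) ⟨by simp, hx⟩ ⟨by simp, hy⟩
    simpa only [h0 x hx, h1 y hy] using this
  · intro h
    refine ⟨fun p => (1 - p.1) • E₀ p.2 + p.1 • E₁ p.2, ?_, by simp, by simp, ?_⟩
    · have h₀ : ContinuousOn (fun p : ℝ × (ℝ × ℝ) => E₀ p.2) (Icc (0 : ℝ) 1 ×ˢ unitCircle) :=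
        hE₀.comp continuousOn_snd fun p hp => hp.2
      have h₁ : ContinuousOn (fun p : ℝ × (ℝ × ℝ) => E₁ p.2) (Icc (0 : ℝ) 1 ×ˢ unitCircle) :=
        hE₁.comp continuousOn_snd fun p hp => hp.2
      exact ((continuousOn_const.sub continuousOn_fst).smul h₀).add (continuousOn_fst.smul h₁)
    · intro t ht x hx
      convert convex_comb_ne_zero (hrot₀ x hx) (hrot₁ x hx) (h x hx x hx) ht using 1
      simp [dot, J]
      ring
end

section
/- Let S¹ = {z ∈ ℂ : |z| = 1} and let E : S¹ → ℂ be continuous with Im(E(z) · conj(z)) ≠ 0 for all z ∈ S¹ (so E(z) ≠ 0 and E(z) is never a real multiple of z). Then E, regarded as a continuous map S¹ → ℂ \ {0}, is homotopic within ℂ \ {0} to the inclusion map z ↦ z. -/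
open Set

/-- Homotopy-theoretic form of Corollary 2.14: a continuous rotating field
`E : S¹ → ℂ \ {0}` (i.e. `Im(E(z)·conj z) ≠ 0` on the unit circle) is homotopic within
`ℂ \ {0}` to the inclusion `z ↦ z`. -/
theorem rotating_field_homotopic_to_inclusion (E : ℂ → ℂ)
    (hE : ContinuousOn E (Metric.sphere (0 : ℂ) 1))
    (hrot : ∀ z ∈ Metric.sphere (0 : ℂ) 1, (E z * (starRingEnd ℂ) z).im ≠ 0) :
    ∃ H : ℝ × ℂ → ℂ,
      ContinuousOn H (Icc (0 : ℝ) 1 ×ˢ Metric.sphere (0 : ℂ) 1) ∧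
      (∀ z ∈ Metric.sphere (0 : ℂ) 1, H (0, z) = E z) ∧
      (∀ z ∈ Metric.sphere (0 : ℂ) 1, H (1, z) = z) ∧
      ∀ t ∈ Icc (0 : ℝ) 1, ∀ z ∈ Metric.sphere (0 : ℂ) 1, H (t, z) ≠ 0 := by
  -- The straight-line homotopy works: `Im(· * conj z)` scales `E z` by `1 - t` and kills `t * z`,
  -- so a zero can only occur at `t = 1`, where the value is `z ≠ 0`.
  refine ⟨fun p => (1 - (p.1 : ℂ)) * E p.2 + (p.1 : ℂ) * p.2, ?_, ?_, ?_, ?_⟩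
  · have hE' : ContinuousOn (fun p : ℝ × ℂ => E p.2)
        (Icc (0 : ℝ) 1 ×ˢ Metric.sphere (0 : ℂ) 1) :=
      hE.comp continuousOn_snd fun p hp => hp.2
    have ht : ContinuousOn (fun p : ℝ × ℂ => (p.1 : ℂ))
        (Icc (0 : ℝ) 1 ×ˢ Metric.sphere (0 : ℂ) 1) :=
      (Complex.continuous_ofReal.comp continuous_fst).continuousOn
    exact ((continuousOn_const.sub ht).mul hE').add (ht.mul continuousOn_snd)
  · intro z _
    simp
  · intro z _
    simp
  · intro t _ z hz h
    have him : (1 - t) * (E z * (starRingEnd ℂ) z).im = 0 := by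
      have h' := congrArg (fun w => (w * (starRingEnd ℂ) z).im) h
      simp only [Complex.mul_im, Complex.mul_re, Complex.add_im, Complex.add_re, Complex.sub_im,
        Complex.sub_re, Complex.ofReal_re, Complex.ofReal_im, Complex.one_re, Complex.one_im,
        Complex.conj_re, Complex.conj_im, Complex.zero_re, Complex.zero_im] at h' ⊢
      linear_combination h'
    have ht : t = 1 := by
      linarith [(mul_eq_zero.mp him).resolve_right (hrot z hz)]
    subst ht
    have hz0 : z = 0 := by simpa using h
    simp [hz0] at hz
end

section
/- Consider the degenerate dynamical system (x₁² + x₂² − 1)·(dx/dt) = (−x₁, −x₂) on ℝ², i.e., the ODE dx/dt = x/(1 − |x|²) away from the unit circle, whose degeneracy set is the unit circle {|x| = 1}. For every initial condition x(0) = x₀ with |x₀| ∉ {0, 1}, the maximal forward solution is defined on a bounded interval [0, T) with T < ∞, and |x(t)| → 1 as t → T⁻; moreover |x(t)| is strictly increasing in t when 0 < |x₀| < 1 and strictly decreasing when |x₀| > 1. Thus trajectories from both sides reach the degeneracy circle in finite time. -/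
open Set Filter

/-!
The system is radial, and with `s = log |x|` it reads `(1 - exp (2 s)) s' = 1`, so
`s - exp (2 s) / 2` grows at unit speed along trajectories. This first integral attains its maximum
`-1/2` at `s = 0`, that is, on the unit circle, and is strictly monotone on each side of it.
Inverting it on the relevant side gives the solution explicitly, and the time needed to reach the
circle is the finite gap between the maximal value and the initial one.

Both sides are treated at once by writing `s = e * u` with `e = 1` (inside) or `e = -1` (outside)
and `u < 0`. The inversion is `exists_left_inverse`, and `exists_logRadius` translates time so
that the trajectory starts at the prescribed `u₀`.
-/

/-- A function with positive derivative on `(-∞, 0)` that lies below the identity there has an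
inverse branch `g` on `(-∞, F 0)`; it is increasing, differentiable, and tends to `0` at the right
end. -/
lemma exists_left_inverse (F F' : ℝ → ℝ) (hF : ∀ u, HasDerivAt F (F' u) u)
    (hpos : ∀ u < 0, 0 < F' u) (hle : ∀ u ≤ 0, F u ≤ u) :
    (∀ u < 0, F u < F 0) ∧ ∃ g : ℝ → ℝ, (∀ u < 0, g (F u) = u) ∧
      (∀ t < F 0, HasDerivAt g (F' (g t))⁻¹ t) ∧
      StrictMonoOn g (Iio (F 0)) ∧ Tendsto g (nhdsWithin (F 0) (Iio (F 0))) (nhds 0) := by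
  have hcont : Continuous F := continuous_iff_continuousAt.2 fun u => (hF u).continuousAt
  have hmono : StrictMonoOn F (Iic 0) := by
    refine strictMonoOn_of_deriv_pos (convex_Iic 0) hcont.continuousOn fun u hu => ?_
    rw [interior_Iic] at hu
    rw [(hF u).deriv]
    exact hpos u hu
  have hex : ∀ t, ∃ u, t < F 0 → u < 0 ∧ F u = t := by
    intro t
    by_cases ht : t < F 0
    · have hm : min t 0 ≤ 0 := min_le_right _ _
      obtain ⟨u, hu, hut⟩ := intermediate_value_Icc hm hcont.continuousOn
        ⟨(hle _ hm).trans (min_le_left _ _), ht.le⟩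
      refine ⟨u, fun _ => ⟨lt_of_le_of_ne hu.2 ?_, hut⟩⟩
      rintro rfl
      exact ht.ne' hut
    · exact ⟨0, fun h => absurd h ht⟩
  choose g hg using hex
  have hFlt : ∀ u < 0, F u < F 0 := fun u hu => hmono (mem_Iic.2 hu.le) (mem_Iic.2 le_rfl) hu
  have hinv : ∀ u < 0, g (F u) = u := fun u hu =>
    hmono.injOn (mem_Iic.2 (hg _ (hFlt u hu)).1.le) (mem_Iic.2 hu.le) (hg _ (hFlt u hu)).2
  have hgm : StrictMonoOn g (Iio (F 0)) := by
    intro a ha b hb hab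
    rw [← hmono.lt_iff_lt (mem_Iic.2 (hg a ha).1.le) (mem_Iic.2 (hg b hb).1.le),
      (hg a ha).2, (hg b hb).2]
    exact hab
  refine ⟨hFlt, g, hinv, fun t ht => ?_, hgm, ?_⟩
  · have himage : g '' Iio (F 0) ∈ nhds (g t) :=
      mem_of_superset (Iio_mem_nhds (hg t ht).1) fun u hu => ⟨F u, hFlt u hu, hinv u hu⟩
    refine HasDerivAt.of_local_left_inverse
      (hgm.continuousAt_of_image_mem_nhds (Iio_mem_nhds ht) himage) (hF _)
      (hpos _ (hg t ht).1).ne' ?_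
    filter_upwards [Iio_mem_nhds ht] with s hs using (hg s hs).2
  · refine tendsto_order.2 ⟨fun a ha => ?_, fun a ha => ?_⟩
    · filter_upwards [Ioo_mem_nhdsLT (hFlt a ha)] with t ht
      have h := hgm (hFlt a ha) ht.2 ht.1
      rwa [hinv a ha] at h
    · filter_upwards [self_mem_nhdsWithin] with t ht
      exact (hg t ht).1.trans ha

/-- The signed logarithmic radius `u = e * log |x|` as a function of time, on either side of the
circle. -/
lemma exists_logRadius (e : ℝ) (he : e = 1 ∨ e = -1) (u₀ : ℝ) (hu₀ : u₀ < 0) :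
    ∃ T : ℝ, 0 < T ∧ ∃ u : ℝ → ℝ, u 0 = u₀ ∧
      (∀ t < T, HasDerivAt u (e * (1 - Real.exp (e * u t) ^ 2))⁻¹ t) ∧
      StrictMonoOn u (Iio T) ∧ Tendsto u (nhdsWithin T (Iio T)) (nhds 0) := by
  set F : ℝ → ℝ := fun u => e * u - Real.exp (e * u) ^ 2 / 2 with hFdef
  have hF : ∀ u, HasDerivAt F (e * (1 - Real.exp (e * u) ^ 2)) u := by
    intro u
    have h1 : HasDerivAt (fun u : ℝ => e * u) e u := by
      simpa using (hasDerivAt_id u).const_mul e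
    exact (h1.sub ((h1.exp.pow 2).div_const 2)).congr_deriv (by push_cast; ring)
  have hpos : ∀ u < 0, 0 < e * (1 - Real.exp (e * u) ^ 2) := by
    intro u hu
    rcases he with rfl | rfl
    · have h : Real.exp (1 * u) < 1 := Real.exp_lt_one_iff.2 (by linarith)
      nlinarith [Real.exp_pos (1 * u)]
    · have h : 1 < Real.exp (-1 * u) := Real.one_lt_exp_iff.2 (by linarith)
      nlinarith
  have hle : ∀ u ≤ 0, F u ≤ u := by
    intro u hu
    rcases he with rfl | rfl
    · simp only [hFdef]
      nlinarith [sq_nonneg (Real.exp (1 * u))]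
    · simp only [hFdef]
      -- `exp v ≥ 1 + v` with `v = -u` gives `v - exp (2 v) / 2 ≤ -(1 + v ^ 2) / 2 ≤ -v`.
      nlinarith [Real.add_one_le_exp (-1 * u), sq_nonneg (u + 1)]
  obtain ⟨hFlt, g, hinv, hder, hgm, hlim⟩ := exists_left_inverse F _ hF hpos hle
  refine ⟨F 0 - F u₀, sub_pos.2 (hFlt u₀ hu₀), fun t => g (t + F u₀), by simp [hinv u₀ hu₀],
    fun t ht => ?_, fun a ha b hb hab => ?_, ?_⟩
  · exact (hder (t + F u₀) (by linarith)).comp_add_const t (F u₀)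
  · simp only [mem_Iio] at ha hb
    exact hgm (mem_Iio.2 (by linarith)) (mem_Iio.2 (by linarith)) (by linarith)
  · refine hlim.comp (tendsto_nhdsWithin_iff.2 ⟨?_, ?_⟩)
    · have h : Continuous fun t : ℝ => t + F u₀ := by fun_prop
      have h2 := h.tendsto (F 0 - F u₀)
      simp only [sub_add_cancel] at h2
      exact h2.mono_left nhdsWithin_le_nhds
    · filter_upwards [self_mem_nhdsWithin] with t ht
      simp only [mem_Iio] at ht ⊢
      linarith

/-- The trajectory `x t = (|x t| / |x₀|) • x₀` with `|x t| = exp (e * u t)`. -/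
lemma exists_trajectory (x₀ : EuclideanSpace ℝ (Fin 2)) (h0 : ‖x₀‖ ≠ 0) (e : ℝ)
    (he : e = 1 ∨ e = -1) (hu₀ : e * Real.log ‖x₀‖ < 0) :
    ∃ T : ℝ, 0 < T ∧ ∃ u : ℝ → ℝ, ∃ x : ℝ → EuclideanSpace ℝ (Fin 2), x 0 = x₀ ∧
      (∀ t, ‖x t‖ = Real.exp (e * u t)) ∧
      (∀ t ∈ Ico (0 : ℝ) T, HasDerivAt x ((1 - ‖x t‖ ^ 2)⁻¹ • x t) t) ∧
      Tendsto (fun t => ‖x t‖) (nhdsWithin T (Iio T)) (nhds 1) ∧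
      StrictMonoOn u (Ico 0 T) := by
  obtain ⟨T, hT, u, hu0, hder, hmono, hlim⟩ := exists_logRadius e he _ hu₀
  have hee : e * e = 1 := by rcases he with rfl | rfl <;> norm_num
  have hrpos : 0 < ‖x₀‖ := lt_of_le_of_ne (norm_nonneg _) h0.symm
  have hnorm : ∀ t, ‖(Real.exp (e * u t) * ‖x₀‖⁻¹) • x₀‖ = Real.exp (e * u t) := by
    intro t
    rw [norm_smul, Real.norm_of_nonneg (by positivity), mul_assoc, inv_mul_cancel₀ h0, mul_one]
  refine ⟨T, hT, u, fun t => (Real.exp (e * u t) * ‖x₀‖⁻¹) • x₀, ?_, hnorm, fun t ht => ?_, ?_,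
    hmono.mono fun t ht => ht.2⟩
  · simp only [hu0]
    rw [← mul_assoc, hee, one_mul, Real.exp_log hrpos, mul_inv_cancel₀ h0, one_smul]
  · simp only [hnorm]
    have h := ((((hder t ht.2).const_mul e).exp).mul_const ‖x₀‖⁻¹).smul_const x₀
    have hinv : e * e⁻¹ = 1 := mul_inv_cancel₀ (left_ne_zero_of_mul_eq_one hee)
    refine h.congr_deriv ?_
    rw [smul_smul, mul_inv]
    congr 1
    linear_combination ((Real.exp (e * u t) * (1 - Real.exp (e * u t) ^ 2)⁻¹ * ‖x₀‖⁻¹)) * hinv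
  · simp only [hnorm]
    have h := (Real.continuous_exp.tendsto _).comp (hlim.const_mul e)
    simpa [Function.comp_def] using h

/-- Example 2.2(a): for the system `(|x|² - 1)·dx/dt = -x`, i.e. `dx/dt = x/(1 - |x|²)`
away from the unit circle (the degeneracy set), every trajectory starting at `x₀` with
`|x₀| ∉ {0,1}` reaches the degeneracy circle in finite time: the forward solution lives on
a bounded interval `[0, T)` with `|x(t)| → 1` as `t → T⁻`, `|x(t)|` strictly increasing
when `0 < |x₀| < 1` and strictly decreasing when `|x₀| > 1`. -/
theorem annihilation_ring_finite_time (x₀ : EuclideanSpace ℝ (Fin 2))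
    (h0 : ‖x₀‖ ≠ 0) (h1 : ‖x₀‖ ≠ 1) :
    ∃ T : ℝ, 0 < T ∧
      ∃ x : ℝ → EuclideanSpace ℝ (Fin 2),
        x 0 = x₀ ∧
        (∀ t ∈ Ico (0 : ℝ) T, HasDerivAt x ((1 - ‖x t‖ ^ 2)⁻¹ • x t) t) ∧
        Tendsto (fun t => ‖x t‖) (nhdsWithin T (Iio T)) (nhds 1) ∧
        (‖x₀‖ < 1 → StrictMonoOn (fun t => ‖x t‖) (Ico 0 T)) ∧
        (1 < ‖x₀‖ → StrictAntiOn (fun t => ‖x t‖) (Ico 0 T)) := by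
  have hrpos : 0 < ‖x₀‖ := lt_of_le_of_ne (norm_nonneg _) h0.symm
  rcases lt_or_gt_of_ne h1 with h | h
  · obtain ⟨T, hT, u, x, hx0, hn, hd, hl, hm⟩ := exists_trajectory x₀ h0 1 (Or.inl rfl)
      (by simpa using Real.log_neg hrpos h)
    refine ⟨T, hT, x, hx0, hd, hl, fun _ a ha b hb hab => ?_, fun h' => absurd h' h.not_gt⟩
    simp only [hn]
    exact Real.exp_lt_exp.2 (by linarith [hm ha hb hab])
  · obtain ⟨T, hT, u, x, hx0, hn, hd, hl, hm⟩ := exists_trajectory x₀ h0 (-1) (Or.inr rfl)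
      (by simpa using Real.log_pos h)
    refine ⟨T, hT, x, hx0, hd, hl, fun h' => absurd h' h.not_gt, fun _ a ha b hb hab => ?_⟩
    simp only [hn]
    exact Real.exp_lt_exp.2 (by linarith [hm ha hb hab])
end
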